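/- Let q > 1 be an integer, n = q² + q + 1, D ⊆ ℤ/nℤ a difference set containing 0, and π₁, π₂ permutations of D fixing 0. Let Γ = ⟨σ₀, σ₁, σ₂ ∣ σ₀ⁿ, σ₁ⁿ, σ₂ⁿ, σ₀^d σ₁^{π₁(d)} σ₂^{π₂(d)} (d ∈ D)⟩ be the corresponding presented group. Then for every nonzero d ∈ D and every e ∈ ℤ/nℤ, the element σ₀^{d} σ₁^{e} (exponents being the integer representatives of d and e) has finite order in Γ if and only if e = 0 or e = π₁(d). -/

import Mathlib

/-- A subset `D` of `ℤ/mℤ` is a difference set if every nonzero element `a` can be written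
in exactly one way as `a = d₁ − d₂` with `d₁, d₂ ∈ D`. -/
def IsDifferenceSet {m : ℕ} (D : Set (ZMod m)) : Prop :=
  ∀ a : ZMod m, a ≠ 0 → ∃! p : ZMod m × ZMod m, p.1 ∈ D ∧ p.2 ∈ D ∧ p.1 - p.2 = a

/-- The relations of Essert's presentation of a panel-regular `Ã₂`-lattice:
`σ₀ⁿ, σ₁ⁿ, σ₂ⁿ` and `σ₀^d σ₁^{π₁(d)} σ₂^{π₂(d)}` for `d ∈ D`, exponents being integer
representatives. -/
def essertRels (n : ℕ) (D : Set (ZMod n)) (π₁ π₂ : ZMod n → ZMod n) :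
    Set (FreeGroup (Fin 3)) :=
  {FreeGroup.of 0 ^ n, FreeGroup.of 1 ^ n, FreeGroup.of 2 ^ n} ∪
  {r | ∃ d ∈ D, r = FreeGroup.of 0 ^ d.val * FreeGroup.of 1 ^ (π₁ d).val *
    FreeGroup.of 2 ^ (π₂ d).val}

/-!
The lattice acts on the vertices at infinity of its building, the parallelism classes of singular
rays. Each class has exactly one ray issuing from the base vertex of type `i`, encoded by the
exponents `a₀, a₁, …` of the word `σᵢ^a₀ σᵢ₊₁^a₁ ⋯`; in these coordinates `σᵢ` just increments `a₀`.
Passing to the parallel ray from an adjacent vertex sweeps out a strip of chambers, which gives an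
explicit transducer on sequences of exponents, and going around a chamber with it is the identity.

Infinite order comes from ping-pong with a single player: if `e ∉ D`, then `σ₀^d σ₁^e` maps a set
of vertices at infinity into a proper subset of itself. If `e ∈ D`, the inverse of `σ₀^d σ₁^e` is
conjugate to `σ₀^(-d) σ₁^(-e)`, and the same argument applies with the roles of `d` and `0 ∈ D`
exchanged: `π₁(d) - e ∉ D` unless `e = 0` or `e = π₁(d)`, since differences in `D` are unique.
-/

open Set
open scoped Stream'

theorem isOfFinOrder_mul_comm {G : Type*} [Group G] {a b : G} :
    IsOfFinOrder (a * b) ↔ IsOfFinOrder (b * a) := by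
  have hconj : SemiconjBy b (a * b) (b * a) := (mul_assoc b a b).symm
  rw [← orderOf_pos_iff, ← orderOf_pos_iff, hconj.orderOf_eq]

theorem not_isOfFinOrder_of_mapsTo_ssubset {M X : Type*} [Monoid M] [MulAction M X] {g : M}
    {U V : Set X} (hVU : V ⊂ U) (hg : MapsTo (g • ·) U V) : ¬ IsOfFinOrder g := by
  rw [isOfFinOrder_iff_pow_eq_one]
  rintro ⟨m, hm, hgm⟩
  obtain ⟨x, hxU, hxV⟩ := exists_of_ssubset hVU
  have hU : MapsTo (g • ·)^[m - 1] U U := (hg.mono_right hVU.subset).iterate _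
  have hx : (g • ·)^[m - 1 + 1] x ∈ V := by
    rw [Function.iterate_succ_apply']
    exact hg (hU hxU)
  rw [Nat.sub_add_cancel hm, smul_iterate, hgm] at hx
  exact hxV (by simpa using hx)

theorem fin_three_add_one_add_one_add_one (i : Fin 3) : i + 1 + 1 + 1 = i := by
  revert i; decide

theorem fin_three_eq_or_eq_or_eq (i k : Fin 3) : k = i ∨ k = i + 1 ∨ k = i + 1 + 1 := by
  revert i k; decide

/-- Three families `δ 0`, `δ 1`, `δ 2` of elements of `A` with a common index type, each of which
represents every nonzero element of `A` uniquely as a difference. Such a system describes the local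
structure of a panel-regular lattice: in the link of a vertex of type `i`, the points and the lines
are both labelled by `A`, the line `ℓ` consists of the points `ℓ + δ i x`, and there is one relation
`σ₀ ^ δ 0 x * σ₁ ^ δ 1 x * σ₂ ^ δ 2 x = 1` for every index `x`. -/
structure DifferenceSystem (I A : Type*) [AddCommGroup A] where
  δ : Fin 3 → I → A
  injective (i : Fin 3) : Function.Injective (δ i)
  existsUnique_sub_eq (i : Fin 3) (a : A) : a ≠ 0 → ∃! x : I × I, δ i x.1 - δ i x.2 = a
  base : I
  δ_base (i : Fin 3) : δ i base = 0

namespace DifferenceSystem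

variable {I A : Type*} [AddCommGroup A]

/-- The turn of a sequence of exponents about its initial vertex by `c`. -/
def rotate (c : A) (a : Stream' A) : Stream' A := (a.head + c) :: a.tail

@[simp] theorem head_rotate (c : A) (a : Stream' A) : (rotate c a).head = a.head + c := rfl

@[simp] theorem tail_rotate (c : A) (a : Stream' A) : (rotate c a).tail = a.tail := rfl

@[simp] theorem rotate_cons (c x : A) (a : Stream' A) : rotate c (x :: a) = (x + c) :: a := rfl

theorem rotate_rotate (c c' : A) (a : Stream' A) : rotate c (rotate c' a) = rotate (c' + c) a := by
  simp [rotate, add_assoc]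

@[simp] theorem rotate_zero (a : Stream' A) : rotate 0 a = a := by
  simp [rotate]

theorem get_rotate_congr (c : A) {a b : Stream' A} {k : ℕ} (h : a.get k = b.get k) :
    (rotate c a).get k = (rotate c b).get k := by
  cases k
  · exact congrArg (· + c) h
  · exact h

variable (F : DifferenceSystem I A)

section Differences

variable {F} {i : Fin 3} {x y z w : I}

theorem exists_ne_and_sub_eq (i : Fin 3) {a : A} (ha : a ≠ 0) :
    ∃ x y, x ≠ y ∧ a = F.δ i x - F.δ i y := by
  obtain ⟨⟨x, y⟩, hxy, -⟩ := F.existsUnique_sub_eq i a ha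
  refine ⟨x, y, ?_, hxy.symm⟩
  rintro rfl
  exact ha (by simpa using hxy.symm)

theorem sub_δ_ne_zero (hxy : x ≠ y) : F.δ i x - F.δ i y ≠ 0 :=
  sub_ne_zero.2 ((F.injective i).ne hxy)

theorem eq_and_eq_of_sub_eq_sub (hxy : x ≠ y) (h : F.δ i x - F.δ i y = F.δ i z - F.δ i w) :
    x = z ∧ y = w :=
  Prod.mk.inj <| (F.existsUnique_sub_eq i _ (sub_δ_ne_zero hxy)).unique
    (y₁ := (x, y)) (y₂ := (z, w)) rfl h.symm

/-- Otherwise a nonzero `a` would be the difference of at least two pairs, since all but at most two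
elements `y` satisfy `y ∈ range (F.δ i)` and `y + a ∈ range (F.δ i)`. -/
theorem nontrivial_compl_range (F : DifferenceSystem I A) (hA : 4 ≤ ENat.card A) (i : Fin 3) :
    (range (F.δ i))ᶜ.Nontrivial := by
  by_contra hsub
  rw [not_nontrivial_iff] at hsub
  obtain ⟨t, ht⟩ : ∃ t, ∀ s ≠ t, s ∈ range (F.δ i) := by
    obtain hempty | ⟨t, ht⟩ := hsub.eq_empty_or_singleton
    · exact ⟨0, fun s _ => compl_empty_iff.1 hempty ▸ mem_univ s⟩
    · exact ⟨t, fun s hs => by_contra fun h => hs (ht.subset h)⟩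
  have : Nontrivial A := (ENat.one_lt_card_iff_nontrivial A).1 (lt_of_lt_of_le (by norm_num) hA)
  obtain ⟨a, ha⟩ := exists_ne (0 : A)
  obtain ⟨y, hy, y', hy', hyy'⟩ : ({t, t - a}ᶜ : Set A).Nontrivial := by
    rw [← one_lt_encard_iff_nontrivial]
    by_contra! hcompl
    have hpair : ({t, t - a} : Set A).encard ≤ 1 + 1 :=
      (encard_insert_le _ _).trans_eq (by rw [encard_singleton])
    have hcard := add_le_add hpair hcompl
    rw [encard_add_encard_compl, encard_univ] at hcard
    exact absurd (hA.trans hcard) (by norm_num)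
  have hrep : ∀ y ∈ ({t, t - a}ᶜ : Set A), ∃ u v, F.δ i v = y ∧ F.δ i u - F.δ i v = a := by
    intro y hy
    simp only [mem_compl_iff, mem_insert_iff, mem_singleton_iff, not_or, eq_sub_iff_add_eq] at hy
    obtain ⟨⟨v, hv⟩, u, hu⟩ := And.intro (ht y hy.1) (ht (y + a) hy.2)
    exact ⟨u, v, hv, by rw [hu, hv, add_sub_cancel_left]⟩
  obtain ⟨⟨u, v, rfl, huv⟩, u', v', rfl, huv'⟩ := And.intro (hrep y hy) (hrep y' hy')
  have hne : u ≠ v := by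
    rintro rfl
    exact ha (by rw [← huv, sub_self])
  exact hyy' (congrArg (F.δ i) (eq_and_eq_of_sub_eq_sub hne (huv.trans huv'.symm)).2)

end Differences

/-- The pair `(x, y)` with `F.δ i x - F.δ i y = a`, unspecified if `a = 0`. -/
noncomputable def pairOf (i : Fin 3) (a : A) : I × I :=
  have : Nonempty I := ⟨F.base⟩
  Function.invFun (fun x : I × I => F.δ i x.1 - F.δ i x.2) a

variable {F} in
theorem pairOf_sub {i : Fin 3} {x y : I} (hxy : x ≠ y) :
    F.pairOf i (F.δ i x - F.δ i y) = (x, y) := by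
  have : Nonempty I := ⟨x⟩
  have h := Function.invFun_eq (f := fun z : I × I => F.δ i z.1 - F.δ i z.2) ⟨(x, y), rfl⟩
  exact Prod.ext_iff.2 <| (eq_and_eq_of_sub_eq_sub hxy h.symm).imp Eq.symm Eq.symm

open Classical in
/-- Let `v` be a vertex of type `i` and `v'` the neighbour of `v` in the direction `δ i x`. If `a`
encodes a ray issuing from `v`, then `F.transfer i x a` encodes the parallel ray issuing from `v'`.

If the ray passes through `v'`, this is its tail. Otherwise the line `u` through `v'` and the first
vertex `v₁` of the ray is given by `a.head - δ i x = δ i z - δ i w`; the parallel ray goes from `v'`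
to `u`, and continues as the parallel from `u` to the ray issuing from `v₁`. The correction in the
exponent of index `1` accounts for arriving at `u` from `v'` instead of `v₁`. -/
noncomputable def transfer : Fin 3 → I → Stream' A → Stream' A
  | i, x, a, 0 =>
    if a.head = F.δ i x then a.get 1 else F.δ (i + 1) (F.pairOf i (a.head - F.δ i x)).2
  | i, x, a, j + 1 =>
    if a.head = F.δ i x then a.get (j + 2)
    else
      let (z, w) := F.pairOf i (a.head - F.δ i x)
      transfer (i + 1) z a.tail j +
        if j = 0 then F.δ (i + 1 + 1) w - F.δ (i + 1 + 1) z else 0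

section Transfer

variable {F} {i : Fin 3} {x y z w : I} {a : Stream' A}

theorem transfer_of_head_eq (h : a.head = F.δ i x) : F.transfer i x a = a.tail := by
  funext j
  cases j <;> rw [transfer, if_pos h] <;> rfl

theorem transfer_δ_cons (F : DifferenceSystem I A) (i : Fin 3) (x : I) (a : Stream' A) :
    F.transfer i x (F.δ i x :: a) = a :=
  transfer_of_head_eq rfl

theorem transfer_of_head_sub_eq (hzw : z ≠ w) (h : a.head - F.δ i x = F.δ i z - F.δ i w) :
    F.transfer i x a = F.δ (i + 1) w ::
      rotate (F.δ (i + 1 + 1) w - F.δ (i + 1 + 1) z) (F.transfer (i + 1) z a.tail) := by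
  have hne : a.head ≠ F.δ i x := sub_ne_zero.1 (h ▸ sub_δ_ne_zero hzw)
  funext j
  cases j with
  | zero => rw [transfer, if_neg hne, h, pairOf_sub hzw]; rfl
  | succ j =>
    rw [transfer, if_neg hne, h, pairOf_sub hzw]
    cases j
    · rfl
    · exact add_zero _

theorem transfer_rotate (F : DifferenceSystem I A) (i : Fin 3) (x y : I) (a : Stream' A) :
    F.transfer i x (rotate (F.δ i x - F.δ i y) a) = F.transfer i y a := by
  have hhead : (rotate (F.δ i x - F.δ i y) a).head - F.δ i x = a.head - F.δ i y := by
    rw [head_rotate]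
    abel
  by_cases h : a.head - F.δ i y = 0
  · rw [transfer_of_head_eq (sub_eq_zero.1 h), transfer_of_head_eq (sub_eq_zero.1 (hhead.trans h)),
      tail_rotate]
  · obtain ⟨z, w, hzw, h⟩ := F.exists_ne_and_sub_eq i h
    rw [transfer_of_head_sub_eq hzw h, transfer_of_head_sub_eq hzw (hhead.trans h), tail_rotate]

theorem transfer_transfer_of_head_sub_eq (hzw : z ≠ w) (hwx : w ≠ x)
    (h : a.head - F.δ i x = F.δ i z - F.δ i w) :
    F.transfer (i + 1) x (F.transfer i x a) = F.δ (i + 1 + 1) x ::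
      rotate (a.head - F.δ i z) (F.transfer (i + 1 + 1) z (F.transfer (i + 1) z a.tail)) := by
  have hhead : F.δ i x - F.δ i w = a.head - F.δ i z := by
    rw [sub_eq_iff_eq_add.1 h]
    abel
  rw [transfer_of_head_sub_eq hzw h, transfer_of_head_sub_eq hwx rfl, Stream'.tail_cons,
    transfer_rotate, fin_three_add_one_add_one_add_one, hhead]

end Transfer

section Rays

/-- The sequence `a` of exponents is a straight continuation of a path arriving in a vertex of type
`i`: no two consecutive edges lie in a common chamber. -/
def Straight (i : Fin 3) (a : Stream' A) : Prop :=
  ∀ j, a.get j ∉ range (F.δ ((· + 1)^[j] i))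

/-- The sequence `a` of exponents encodes a ray issuing from a vertex of type `i`. The initial
direction `a.head` is arbitrary. -/
def IsRay (i : Fin 3) (a : Stream' A) : Prop := F.Straight (i + 1) a.tail

variable {F} {i : Fin 3} {a : Stream' A}

theorem straight_iff : F.Straight i a ↔ a.head ∉ range (F.δ i) ∧ F.IsRay i a :=
  ⟨fun h => ⟨h 0, fun j => h (j + 1)⟩, fun h j => Nat.casesOn j h.1 h.2⟩

theorem Straight.head_ne (h : F.Straight i a) (x : I) : a.head ≠ F.δ i x :=
  fun hx => h 0 ⟨x, hx.symm⟩

theorem exists_straight (hF : ∀ i, ∃ s, s ∉ range (F.δ i)) (i : Fin 3) : ∃ a, F.Straight i a := by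
  choose t ht using hF
  exact ⟨fun j => t ((· + 1)^[j] i), fun j => ht _⟩

theorem IsRay.rotate (h : F.IsRay i a) (c : A) : F.IsRay i (rotate c a) := h

theorem IsRay.tail (h : F.IsRay i a) : F.IsRay (i + 1) a.tail := (straight_iff.1 h).2

theorem IsRay.get_one_transfer_notMem (h : F.IsRay i a) {x : I} (hx : a.head ≠ F.δ i x) :
    (F.transfer i x a).get 1 ∉ range (F.δ (i + 1 + 1)) := by
  obtain ⟨z, w, hzw, hx⟩ := F.exists_ne_and_sub_eq i (sub_ne_zero.2 hx)
  obtain ⟨u, v, huv, hz⟩ := F.exists_ne_and_sub_eq (i + 1) (sub_ne_zero.2 (Straight.head_ne h z))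
  rw [transfer_of_head_sub_eq hzw hx, transfer_of_head_sub_eq huv hz]
  rintro ⟨t, ht : F.δ (i + 1 + 1) t = F.δ (i + 1 + 1) v + _⟩
  obtain ⟨-, rfl⟩ := eq_and_eq_of_sub_eq_sub (i := i + 1 + 1) (z := t) (w := v) hzw.symm
    (by rw [ht, add_sub_cancel_left])
  exact Straight.head_ne h u (sub_left_inj.1 hz)

theorem IsRay.straight_tail_transfer (h : F.IsRay i a) {x : I} (hx : a.head ≠ F.δ i x) :
    F.Straight (i + 1 + 1) (F.transfer i x a).tail := by
  intro j
  induction j generalizing i a x with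
  | zero => exact h.get_one_transfer_notMem hx
  | succ j ih =>
    obtain ⟨z, w, hzw, hx⟩ := F.exists_ne_and_sub_eq i (sub_ne_zero.2 hx)
    rw [transfer_of_head_sub_eq hzw hx]
    exact ih h.tail (Straight.head_ne h z)

theorem IsRay.transfer (h : F.IsRay i a) (x : I) : F.IsRay (i + 1) (F.transfer i x a) := by
  by_cases hx : a.head = F.δ i x
  · rw [transfer_of_head_eq hx]
    exact h.tail
  · exact h.straight_tail_transfer hx

theorem Straight.exists_transfer_transfer_eq (h : F.Straight i a) (x : I) :
    ∃ z, F.transfer (i + 1) x (F.transfer i x a) = F.δ (i + 1 + 1) x ::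
      DifferenceSystem.rotate (a.head - F.δ i z)
        (F.transfer (i + 1 + 1) z (F.transfer (i + 1) z a.tail)) := by
  obtain ⟨z, w, hzw, hx⟩ := F.exists_ne_and_sub_eq i (sub_ne_zero.2 (h.head_ne x))
  have hwx : w ≠ x := by
    rintro rfl
    exact h.head_ne z (sub_left_inj.1 hx)
  exact ⟨z, transfer_transfer_of_head_sub_eq hzw hwx hx⟩

/-- If a ray issuing from `v` continues the edge `v''v` of a chamber `v v' v''` straight, then the
parallel ray issuing from `v''` consists of this edge and the given ray. -/
theorem Straight.transfer_transfer (h : F.Straight i a) (x : I) :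
    F.transfer (i + 1) x (F.transfer i x a) = F.δ (i + 1 + 1) x :: a := by
  ext k
  induction k generalizing i a x with
  | zero =>
    obtain ⟨z, hz⟩ := h.exists_transfer_transfer_eq x
    rw [hz, Stream'.get_zero_cons, Stream'.get_zero_cons]
  | succ k ih =>
    obtain ⟨z, hz⟩ := h.exists_transfer_transfer_eq x
    rw [hz, Stream'.get_succ_cons, Stream'.get_succ_cons,
      get_rotate_congr _ (ih (straight_iff.1 h).2 z), rotate_cons,
      fin_three_add_one_add_one_add_one, add_sub_cancel, Stream'.eta]

theorem IsRay.transfer_transfer_transfer (h : F.IsRay i a) (x : I) :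
    F.transfer (i + 1 + 1) x (F.transfer (i + 1) x (F.transfer i x a)) = a := by
  have hstraight (z : I) :
      F.transfer (i + 1 + 1) z (F.transfer (i + 1) z a.tail) = F.δ i z :: a.tail := by
    rw [Straight.transfer_transfer h, fin_three_add_one_add_one_add_one]
  by_cases hx : a.head = F.δ i x
  · rw [transfer_of_head_eq hx, hstraight, ← hx, Stream'.eta]
  obtain ⟨z, w, hzw, hsub⟩ := F.exists_ne_and_sub_eq i (sub_ne_zero.2 hx)
  by_cases hwx : w = x
  · subst hwx
    rw [transfer_of_head_sub_eq hzw hsub, transfer_δ_cons, transfer_rotate, hstraight,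
      ← sub_left_inj.1 hsub, Stream'.eta]
  · rw [transfer_transfer_of_head_sub_eq hzw hwx hsub, transfer_δ_cons, hstraight, rotate_cons,
      add_sub_cancel, Stream'.eta]

end Rays

/-- A vertex at infinity: a parallelism class of rays, given by its representatives issuing from the
three base vertices. -/
@[ext]
structure IdealVertex where
  ray : Fin 3 → Stream' A
  isRay (i : Fin 3) : F.IsRay i (ray i)
  transfer_ray (i : Fin 3) : F.transfer i F.base (ray i) = ray (i + 1)

namespace IdealVertex

variable {F}

theorem ray_injective (i : Fin 3) : Function.Injective fun ω : F.IdealVertex => ω.ray i := by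
  intro ω ω' (h : ω.ray i = ω'.ray i)
  have hsucc (k : Fin 3) (h : ω.ray k = ω'.ray k) : ω.ray (k + 1) = ω'.ray (k + 1) := by
    rw [← ω.transfer_ray, ← ω'.transfer_ray, h]
  ext1
  funext k
  obtain rfl | rfl | rfl := fin_three_eq_or_eq_or_eq i k
  exacts [h, hsucc _ h, hsucc _ (hsucc _ h)]

theorem exists_ray_eq {i : Fin 3} {a : Stream' A} (h : F.IsRay i a) :
    ∃ ω : F.IdealVertex, ω.ray i = a := by
  have hne (i : Fin 3) : i + 1 ≠ i ∧ i + 1 + 1 ≠ i ∧ i + 1 + 1 ≠ i + 1 := by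
    revert i; decide
  refine ⟨⟨fun k => if k = i then a else if k = i + 1 then F.transfer i F.base a else
    F.transfer (i + 1) F.base (F.transfer i F.base a), fun k => ?_, fun k => ?_⟩, if_pos rfl⟩ <;>
  obtain rfl | rfl | rfl := fin_three_eq_or_eq_or_eq i k
  · simpa using h
  · simpa [hne] using h.transfer F.base
  · simpa [hne] using (h.transfer F.base).transfer F.base
  · simp [hne]
  · simp [hne]
  · simpa [hne, fin_three_add_one_add_one_add_one] using h.transfer_transfer_transfer F.base

/-- A vertex at infinity is determined by its representative issuing from one base vertex. -/
noncomputable def rayEquiv (i : Fin 3) : F.IdealVertex ≃ {a // F.IsRay i a} :=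
  Equiv.ofBijective (fun ω => ⟨ω.ray i, ω.isRay i⟩)
    ⟨fun _ _ h => ray_injective i (congrArg Subtype.val h),
      fun a => (exists_ray_eq a.2).imp fun _ => Subtype.ext⟩

/-- The rotation by `c` about the base vertex of type `i`. -/
noncomputable def rotate (i : Fin 3) (c : A) (ω : F.IdealVertex) : F.IdealVertex :=
  (rayEquiv i).symm ⟨_, (ω.isRay i).rotate c⟩

@[simp] theorem ray_rotate (i : Fin 3) (c : A) (ω : F.IdealVertex) :
    (rotate i c ω).ray i = DifferenceSystem.rotate c (ω.ray i) :=
  congrArg Subtype.val ((rayEquiv i).apply_symm_apply _)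

theorem head_ray_of_straight {i : Fin 3} {ω : F.IdealVertex}
    (h : F.Straight (i + 1) (ω.ray (i + 1))) : (ω.ray i).head = 0 := by
  have hray := h.transfer_transfer F.base
  rw [transfer_ray, transfer_ray, fin_three_add_one_add_one_add_one, δ_base] at hray
  rw [hray, Stream'.head_cons]

theorem head_ray_add_one {i : Fin 3} {ω : F.IdealVertex} {x y : I} (hxy : x ≠ y)
    (h : (ω.ray i).head = F.δ i x - F.δ i y) : (ω.ray (i + 1)).head = F.δ (i + 1) y := by
  rw [← transfer_ray, transfer_of_head_sub_eq hxy (by rw [δ_base, sub_zero, h]), Stream'.head_cons]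

theorem exists_head_ray_eq (hF : ∀ i, ∃ s, s ∉ range (F.δ i)) (i : Fin 3) (s : A) :
    ∃ ω : F.IdealVertex, (ω.ray i).head = s := by
  obtain ⟨a, ha⟩ := exists_straight hF (i + 1)
  obtain ⟨ω, hω⟩ := exists_ray_eq (i := i) (a := s :: a) ha
  exact ⟨ω, by rw [hω, Stream'.head_cons]⟩

end IdealVertex

section Rotation

/-- The action on the vertices at infinity of the rotations about the base vertex of type `i`. -/
noncomputable def rotation (i : Fin 3) : Multiplicative A →* Equiv.Perm F.IdealVertex :=
  MonoidHom.toHomPerm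
    { toFun := fun c => IdealVertex.rotate i c.toAdd
      map_one' := funext fun ω => IdealVertex.ray_injective i <| by
        change (IdealVertex.rotate i 0 ω).ray i = ω.ray i
        simp
      map_mul' := fun c c' => funext fun ω => IdealVertex.ray_injective i <| by
        change (IdealVertex.rotate i (c.toAdd + c'.toAdd) ω).ray i =
          (IdealVertex.rotate i c.toAdd (IdealVertex.rotate i c'.toAdd ω)).ray i
        simp [rotate_rotate, add_comm] }

theorem ray_rotation (i : Fin 3) (c : A) (ω : F.IdealVertex) :
    (F.rotation i (.ofAdd c) ω).ray i = rotate c (ω.ray i) :=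
  IdealVertex.ray_rotate i c ω

theorem ray_add_one_rotation_neg_δ (i : Fin 3) (x : I) (ω : F.IdealVertex) :
    (F.rotation i (.ofAdd (-F.δ i x)) ω).ray (i + 1) = F.transfer i x (ω.ray i) := by
  rw [← IdealVertex.transfer_ray, ray_rotation, ← zero_sub, ← F.δ_base i, transfer_rotate]

theorem rotation_mul_rotation_mul_rotation (i : Fin 3) (x : I) :
    F.rotation i (.ofAdd (F.δ i x)) * F.rotation (i + 1) (.ofAdd (F.δ (i + 1) x)) *
      F.rotation (i + 1 + 1) (.ofAdd (F.δ (i + 1 + 1) x)) = 1 := by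
  rw [← inv_eq_one]
  simp only [mul_inv_rev, ← map_inv, ← ofAdd_neg]
  ext1 ω
  refine IdealVertex.ray_injective (i + 1 + 1 + 1) ?_
  simp only [Equiv.Perm.mul_apply, ray_add_one_rotation_neg_δ, Equiv.Perm.one_apply]
  rw [(ω.isRay i).transfer_transfer_transfer, fin_three_add_one_add_one_add_one]

theorem rotation_one_pow {n : ℕ} (F : DifferenceSystem I (ZMod n)) (i : Fin 3) :
    F.rotation i (.ofAdd 1) ^ n = 1 := by
  rw [← map_pow, ← ofAdd_nsmul, nsmul_one, ZMod.natCast_self, ofAdd_zero, map_one]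

theorem rotation_one_pow_val {n : ℕ} [NeZero n] (F : DifferenceSystem I (ZMod n)) (i : Fin 3)
    (c : ZMod n) : F.rotation i (.ofAdd 1) ^ c.val = F.rotation i (.ofAdd c) := by
  rw [← map_pow, ← ofAdd_nsmul, nsmul_one, ZMod.natCast_zmod_val]

variable {F} {i : Fin 3} {x y : I} {b : A}

theorem head_ray_rotation_rotation (hxy : x ≠ y) {ω : F.IdealVertex}
    (hω : (ω.ray (i + 1)).head + b ∉ range (F.δ (i + 1))) :
    ((F.rotation i (.ofAdd (F.δ i x - F.δ i y)) (F.rotation (i + 1) (.ofAdd b) ω)).ray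
      (i + 1)).head = F.δ (i + 1) y := by
  refine IdealVertex.head_ray_add_one hxy ?_
  have hstraight : F.Straight (i + 1) ((F.rotation (i + 1) (.ofAdd b) ω).ray (i + 1)) :=
    straight_iff.2 ⟨by rwa [ray_rotation], IdealVertex.isRay _ _⟩
  rw [ray_rotation, head_rotate, IdealVertex.head_ray_of_straight hstraight, zero_add]

theorem not_isOfFinOrder_rotation_mul_rotation (hA : 4 ≤ ENat.card A) (hxy : x ≠ y)
    (hb : F.δ (i + 1) y + b ∉ range (F.δ (i + 1))) :
    ¬ IsOfFinOrder (F.rotation i (.ofAdd (F.δ i x - F.δ i y)) *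
      F.rotation (i + 1) (.ofAdd b)) := by
  have hF (k : Fin 3) : (range (F.δ k))ᶜ.Nontrivial := F.nontrivial_compl_range hA k
  refine not_isOfFinOrder_of_mapsTo_ssubset
    (U := {ω : F.IdealVertex | (ω.ray (i + 1)).head + b ∉ range (F.δ (i + 1))})
    (V := {ω : F.IdealVertex | (ω.ray (i + 1)).head = F.δ (i + 1) y}) ?_
    fun ω hω => head_ray_rotation_rotation hxy hω
  obtain ⟨s, hs, hsy⟩ := (hF (i + 1)).exists_ne (F.δ (i + 1) y + b)
  obtain ⟨ω, hω⟩ := IdealVertex.exists_head_ray_eq (fun k => (hF k).nonempty) (i + 1) (s - b)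
  refine ⟨fun ω (hω : _ = _) => ?_, fun hUV => hsy ?_⟩
  · rwa [mem_ofPred_eq, hω]
  · have hωV : (ω.ray (i + 1)).head = F.δ (i + 1) y :=
      hUV (show (ω.ray (i + 1)).head + b ∉ _ by rwa [hω, sub_add_cancel])
    rw [← hωV, hω, sub_add_cancel]

theorem eq_zero_or_eq_of_isOfFinOrder (hA : 4 ≤ ENat.card A) (hx : x ≠ F.base)
    (h : IsOfFinOrder (F.rotation i (.ofAdd (F.δ i x)) * F.rotation (i + 1) (.ofAdd b))) :
    b = 0 ∨ b = F.δ (i + 1) x := by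
  by_contra! hb
  by_cases hbD : b ∈ range (F.δ (i + 1))
  · obtain ⟨z, rfl⟩ := hbD
    have hxz : x ≠ z := by
      rintro rfl
      exact hb.2 rfl
    refine not_isOfFinOrder_rotation_mul_rotation (F := F) (i := i) (b := -F.δ (i + 1) z)
      hA hx.symm ?_ ?_
    · rintro ⟨w, hw⟩
      obtain ⟨-, rfl⟩ := eq_and_eq_of_sub_eq_sub (i := i + 1) (z := w) (w := F.base) hxz
        (by rw [hw, δ_base, sub_zero, sub_eq_add_neg])
      exact hb.1 (F.δ_base _)
    · rwa [δ_base, zero_sub, ofAdd_neg, ofAdd_neg, map_inv, map_inv, ← mul_inv_rev,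
        isOfFinOrder_inv_iff, isOfFinOrder_mul_comm]
  · refine not_isOfFinOrder_rotation_mul_rotation (F := F) (i := i) (b := b) hA hx ?_ ?_
    · rwa [δ_base, zero_add]
    · rwa [δ_base, sub_zero]

end Rotation

end DifferenceSystem

namespace IsDifferenceSet

variable {n : ℕ}

theorem existsUnique_sub_eq {I : Type*} {p : I → ZMod n} (hp : Function.Injective p)
    (hD : IsDifferenceSet (range p)) (a : ZMod n) (ha : a ≠ 0) :
    ∃! x : I × I, p x.1 - p x.2 = a := by
  obtain ⟨⟨_, _⟩, ⟨⟨x, rfl⟩, ⟨y, rfl⟩, hxy⟩, huniq⟩ := hD a ha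
  refine ⟨(x, y), hxy, fun z hz => ?_⟩
  have hzxy := huniq (p z.1, p z.2) ⟨mem_range_self _, mem_range_self _, hz⟩
  exact Prod.ext (hp (congrArg Prod.fst hzxy)) (hp (congrArg Prod.snd hzxy))

/-- The difference system of a difference set `D` and of two further difference sets, the images of
`D` under `π₁` and `π₂`. -/
def differenceSystem {D : Set (ZMod n)} (hD : IsDifferenceSet D) (h0D : 0 ∈ D)
    {π₁ π₂ : ZMod n → ZMod n} (hπ₁ : InjOn π₁ D) (hπ₂ : InjOn π₂ D)
    (hD₁ : IsDifferenceSet (π₁ '' D)) (hD₂ : IsDifferenceSet (π₂ '' D))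
    (hπ₁0 : π₁ 0 = 0) (hπ₂0 : π₂ 0 = 0) : DifferenceSystem D (ZMod n) where
  δ := ![Subtype.val, π₁ ∘ Subtype.val, π₂ ∘ Subtype.val]
  injective
    | 0 => Subtype.val_injective
    | 1 => hπ₁.injective
    | 2 => hπ₂.injective
  existsUnique_sub_eq
    | 0 => existsUnique_sub_eq Subtype.val_injective (Subtype.range_val.symm ▸ hD)
    | 1 => existsUnique_sub_eq hπ₁.injective (image_eq_range π₁ D ▸ hD₁)
    | 2 => existsUnique_sub_eq hπ₂.injective (image_eq_range π₂ D ▸ hD₂)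
  base := ⟨0, h0D⟩
  δ_base
    | 0 => rfl
    | 1 => hπ₁0
    | 2 => hπ₂0

end IsDifferenceSet

/-- Essert's panel-regular lattice. -/
abbrev EssertGroup (n : ℕ) (D : Set (ZMod n)) (π₁ π₂ : ZMod n → ZMod n) : Type :=
  PresentedGroup (essertRels n D π₁ π₂)

namespace EssertGroup

open DifferenceSystem

variable {n : ℕ} {D : Set (ZMod n)} {π₁ π₂ : ZMod n → ZMod n}

theorem of_pow_eq_one (i : Fin 3) : (PresentedGroup.of i : EssertGroup n D π₁ π₂) ^ n = 1 :=
  PresentedGroup.one_of_mem (rels := essertRels n D π₁ π₂) (x := FreeGroup.of i ^ n)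
    (Or.inl (by fin_cases i <;> simp))

theorem isOfFinOrder_of [NeZero n] (i : Fin 3) :
    IsOfFinOrder (PresentedGroup.of i : EssertGroup n D π₁ π₂) :=
  isOfFinOrder_iff_pow_eq_one.2 ⟨n, NeZero.pos n, of_pow_eq_one i⟩

theorem of_pow_val_mul_of_pow_val {d : ZMod n} (hd : d ∈ D) :
    (PresentedGroup.of 0 : EssertGroup n D π₁ π₂) ^ d.val * PresentedGroup.of 1 ^ (π₁ d).val =
      (PresentedGroup.of 2 ^ (π₂ d).val)⁻¹ :=
  eq_inv_of_mul_eq_one_left <| PresentedGroup.one_of_mem (rels := essertRels n D π₁ π₂)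
    (x := FreeGroup.of 0 ^ d.val * FreeGroup.of 1 ^ (π₁ d).val * FreeGroup.of 2 ^ (π₂ d).val)
    (Or.inr ⟨d, hd, rfl⟩)

section Action

variable [NeZero n] {F : DifferenceSystem D (ZMod n)}
  (hF : F.δ = ![Subtype.val, π₁ ∘ Subtype.val, π₂ ∘ Subtype.val])

include hF in
theorem lift_rotation_eq_one {r : FreeGroup (Fin 3)} (hr : r ∈ essertRels n D π₁ π₂) :
    FreeGroup.lift (fun i => F.rotation i (.ofAdd 1)) r = 1 := by
  obtain (rfl | rfl | rfl) | ⟨d, hd, rfl⟩ := hr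
  iterate 3 rw [map_pow, FreeGroup.lift_apply_of, rotation_one_pow]
  simp only [map_mul, map_pow, FreeGroup.lift_apply_of, rotation_one_pow_val]
  simpa [hF] using F.rotation_mul_rotation_mul_rotation 0 ⟨d, hd⟩

/-- The action of the lattice on the vertices at infinity of its building. -/
noncomputable def action : EssertGroup n D π₁ π₂ →* Equiv.Perm F.IdealVertex :=
  PresentedGroup.toGroup fun _ => lift_rotation_eq_one hF

theorem action_of_pow_val (i : Fin 3) (c : ZMod n) :
    action hF (PresentedGroup.of i ^ c.val) = F.rotation i (.ofAdd c) := by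
  rw [map_pow, action, PresentedGroup.toGroup.of, rotation_one_pow_val]

end Action

end EssertGroup

open EssertGroup in
theorem isOfFinOrder_iff_in_panelRegular_lattice_general {n : ℕ} (hn : 4 ≤ n) {D : Set (ZMod n)}
    (hD : IsDifferenceSet D) (h0D : 0 ∈ D) {π₁ π₂ : ZMod n → ZMod n}
    (hπ₁ : InjOn π₁ D) (hπ₂ : InjOn π₂ D)
    (hD₁ : IsDifferenceSet (π₁ '' D)) (hD₂ : IsDifferenceSet (π₂ '' D))
    (hπ₁0 : π₁ 0 = 0) (hπ₂0 : π₂ 0 = 0) {d : ZMod n} (hd : d ∈ D) (hd0 : d ≠ 0) (e : ZMod n) :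
    IsOfFinOrder ((PresentedGroup.of 0 : EssertGroup n D π₁ π₂) ^ d.val *
        PresentedGroup.of 1 ^ e.val) ↔ e = 0 ∨ e = π₁ d := by
  have : NeZero n := ⟨by lia⟩
  let F := hD.differenceSystem h0D hπ₁ hπ₂ hD₁ hD₂ hπ₁0 hπ₂0
  constructor
  · intro h
    have hcard : 4 ≤ ENat.card (ZMod n) := by
      rw [ENat.card_eq_coe_fintype_card, ZMod.card]
      exact_mod_cast hn
    have hF : F.δ = ![Subtype.val, π₁ ∘ Subtype.val, π₂ ∘ Subtype.val] := rfl
    have haction := (action hF).isOfFinOrder h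
    rw [map_mul, action_of_pow_val, action_of_pow_val] at haction
    exact F.eq_zero_or_eq_of_isOfFinOrder (i := 0) (x := ⟨d, hd⟩) hcard
      (fun hbase => hd0 (congrArg Subtype.val hbase)) haction
  · rintro (rfl | rfl)
    · rw [ZMod.val_zero, pow_zero, mul_one]
      exact (isOfFinOrder_of 0).pow
    · rw [of_pow_val_mul_of_pow_val hd]
      exact (isOfFinOrder_of 2).pow.inv

/-- In Essert's panel-regular lattice `Γ = ⟨σ₀, σ₁, σ₂ ∣ σ₀ⁿ, σ₁ⁿ, σ₂ⁿ,
σ₀^d σ₁^{π₁(d)} σ₂^{π₂(d)} (d ∈ D)⟩`, an element `σ₀^d σ₁^e` with `d ∈ D` nonzero has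
finite order if and only if `e = 0` or `e = π₁(d)`. -/
theorem isOfFinOrder_iff_in_panelRegular_lattice
    (q n : ℕ) (hq : 1 < q) (hn : n = q ^ 2 + q + 1)
    (D : Set (ZMod n)) (hD : IsDifferenceSet D) (h0D : (0 : ZMod n) ∈ D)
    (π₁ π₂ : ZMod n → ZMod n)
    (hπ₁ : Set.BijOn π₁ D D) (hπ₂ : Set.BijOn π₂ D D)
    (hπ₁0 : π₁ 0 = 0) (hπ₂0 : π₂ 0 = 0)
    (d : ZMod n) (hd : d ∈ D) (hd0 : d ≠ 0) (e : ZMod n) :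
    IsOfFinOrder
        ((PresentedGroup.of 0 : PresentedGroup (essertRels n D π₁ π₂)) ^ d.val *
          PresentedGroup.of 1 ^ e.val) ↔
      e = 0 ∨ e = π₁ d := by
  exact isOfFinOrder_iff_in_panelRegular_lattice_general (by nlinarith) hD h0D hπ₁.injOn hπ₂.injOn
    (hπ₁.image_eq.symm ▸ hD) (hπ₂.image_eq.symm ▸ hD) hπ₁0 hπ₂0 hd hd0 e
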